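/- For every γ > 0 there exist β > 0 and n₀ such that the following holds. Let H=(V,E) be a 3-uniform hypergraph on n > n₀ vertices with δ₁(H) ≥ (5/8 + γ)²·C(n,2). Then there is a loose path P in H with |V(P)| ≤ γ⁷n such that for every subset U ⊆ V∖V(P) with |U| ≤ βn and |U| even, there exists a loose path Q in H with V(Q) = V(P) ∪ U such that P and Q have exactly the same ends. -/

import Mathlib

open Finset

/-- `f` describes a loose path with `k ≥ 1` edges in the `3`-uniform hypergraph `H`:
the vertices `f 0, f 1, …, f (2k)` are distinct, and for every `i < k` the triple
`{f (2i), f (2i+1), f (2i+2)}` is an edge of `H`.  The ends of the path are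
`f 0` and `f (2k)`. -/
def IsLoosePath {V : Type} [DecidableEq V] (H : Finset (Finset V)) (k : ℕ) (f : ℕ → V) :
    Prop :=
  1 ≤ k ∧
  (∀ i ≤ 2 * k, ∀ j ≤ 2 * k, f i = f j → i = j) ∧
  ∀ i < k, ({f (2 * i), f (2 * i + 1), f (2 * i + 2)} : Finset V) ∈ H

/-- The vertex set of the loose path described by `f` with `k` edges. -/
def pathVerts {V : Type} [DecidableEq V] (k : ℕ) (f : ℕ → V) : Finset V :=
  (Finset.range (2 * k + 1)).image f

/-!
The link of every vertex is a graph of density above `25 / 64 = (5 / 8) ^ 2`. Such a graph has more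
than `5 / 8` of its vertices of linear degree, and for two such graphs on the same vertices, some
linear set of vertices has linear degree in one of them and degree above `3 / 8 * n` in the other.
Since `3 / 8 + 5 / 8 = 1`, this lets one choose an absorber for a given pair of vertices one vertex
at a time with linearly many choices at each step, so a positive proportion of all `7`-tuples
absorb any given pair, even when a small set of vertices must be avoided.

Instead of sampling absorbers at random, the proof picks them greedily: averaging over all tuples
gives one that decreases the potential `∑ p, exp (-hits p)` by a constant factor, where `hits p`
counts the chosen absorbers for the pair `p`. After a small linear number of steps the potential is
exponentially small, so every pair has linearly many absorbers. Each new absorber is attached to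
the path constructed so far by a connection of two edges, and a set `U` of even size is absorbed
pair by pair.
-/

section LoosePaths

variable {V : Type*} [DecidableEq V] {H : Finset (Finset V)}

/-- `LoosePathOn H a b S` says that some loose path of `H` from `a` to `b` has vertex set `S`.
Unlike in `IsLoosePath`, the path consisting of a single vertex and no edge is allowed. -/
inductive LoosePathOn (H : Finset (Finset V)) : V → V → Finset V → Prop
  | nil (a : V) : LoosePathOn H a a {a}
  | cons {a b c d : V} {S : Finset V} (he : {a, c, b} ∈ H) (h : LoosePathOn H b d S)
      (ha : a ∉ S) (hc : c ∉ S) (hac : a ≠ c) : LoosePathOn H a d (insert a (insert c S))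

namespace LoosePathOn

variable {a b d : V} {S T : Finset V}

theorem left_mem (h : LoosePathOn H a b S) : a ∈ S := by
  cases h <;> simp

theorem right_mem (h : LoosePathOn H a b S) : b ∈ S := by
  induction h with
  | nil => simp
  | cons _ _ _ _ _ ih => simp [ih]

theorem trans (h₁ : LoosePathOn H a b S) (h₂ : LoosePathOn H b d T) (hST : S ∩ T ⊆ {b}) :
    LoosePathOn H a d (S ∪ T) := by
  induction h₁ with
  | nil a => rwa [singleton_union, insert_eq_self.2 h₂.left_mem]
  | @cons a b' c b S he h ha hc hac ih =>
    have notMem_right {z : V} (hz : z ∈ insert a (insert c S)) (hzS : z ∉ S) : z ∉ T := by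
      intro hzT
      have hzb : z = b := mem_singleton.1 (hST (mem_inter.2 ⟨hz, hzT⟩))
      exact hzS (hzb ▸ h.right_mem)
    have haT : a ∉ T := notMem_right (by simp) ha
    have hcT : c ∉ T := notMem_right (by simp) hc
    have hST' : S ∩ T ⊆ {b} :=
      (inter_subset_inter_right ((subset_insert c S).trans (subset_insert a _))).trans hST
    rw [insert_union, insert_union]
    exact cons he (ih h₂ hST') (by simp [ha, haT]) (by simp [hc, hcT]) hac

end LoosePathOn

end LoosePaths

theorem mem_pathVerts {V : Type} [DecidableEq V] {k : ℕ} {f : ℕ → V} {z : V} :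
    z ∈ pathVerts k f ↔ ∃ i ≤ 2 * k, f i = z := by
  simp [pathVerts]

theorem IsLoosePath.card_pathVerts {V : Type} [DecidableEq V] {H : Finset (Finset V)} {k : ℕ}
    {f : ℕ → V} (h : IsLoosePath H k f) : #(pathVerts k f) = 2 * k + 1 := by
  rw [pathVerts, card_image_of_injOn, card_range]
  intro i hi j hj hij
  rw [coe_range, Set.mem_Iio, Nat.lt_succ_iff] at hi hj
  exact h.2.1 i hi j hj hij

/-- The sequence `a, c, f 0, f 1, …`, which prepends an edge to the loose path described by `f`. -/
def consTwo {α : Type*} (a c : α) (f : ℕ → α) : ℕ → α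
  | 0 => a
  | 1 => c
  | i + 2 => f i

theorem pathVerts_consTwo {V : Type} [DecidableEq V] (a c : V) (k : ℕ) (f : ℕ → V) :
    pathVerts (k + 1) (consTwo a c f) = insert a (insert c (pathVerts k f)) := by
  ext z
  simp only [mem_insert, mem_pathVerts]
  constructor
  · rintro ⟨_ | _ | i, hi, rfl⟩
    · exact .inl rfl
    · exact .inr (.inl rfl)
    · exact .inr (.inr ⟨i, by omega, rfl⟩)
  · rintro (rfl | rfl | ⟨i, hi, rfl⟩)
    · exact ⟨0, by omega, rfl⟩
    · exact ⟨1, by omega, rfl⟩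
    · exact ⟨i + 2, by omega, rfl⟩

theorem consTwo_injOn {V : Type} [DecidableEq V] {a c : V} {k : ℕ} {f : ℕ → V} (hac : a ≠ c)
    (ha : a ∉ pathVerts k f) (hc : c ∉ pathVerts k f)
    (hf : ∀ i ≤ 2 * k, ∀ j ≤ 2 * k, f i = f j → i = j) :
    ∀ i ≤ 2 * (k + 1), ∀ j ≤ 2 * (k + 1), consTwo a c f i = consTwo a c f j → i = j := by
  simp only [mem_pathVerts, not_exists, not_and] at ha hc
  rintro (_ | _ | i) hi (_ | _ | j) hj h
  · rfl
  · exact absurd h hac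
  · exact absurd h.symm (ha j (by omega))
  · exact absurd h hac.symm
  · rfl
  · exact absurd h.symm (hc j (by omega))
  · exact absurd h (ha i (by omega))
  · exact absurd h (hc i (by omega))
  · rw [hf i (by omega) j (by omega) h]

theorem LoosePathOn.exists_isLoosePath {V : Type} [DecidableEq V] {H : Finset (Finset V)} {a b : V}
    {S : Finset V} (h : LoosePathOn H a b S) (hS : 1 < #S) :
    ∃ (k : ℕ) (f : ℕ → V), IsLoosePath H k f ∧ pathVerts k f = S ∧ f 0 = a ∧ f (2 * k) = b := by
  suffices ∃ (k : ℕ) (f : ℕ → V), (∀ i ≤ 2 * k, ∀ j ≤ 2 * k, f i = f j → i = j) ∧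
      (∀ i < k, {f (2 * i), f (2 * i + 1), f (2 * i + 2)} ∈ H) ∧
      pathVerts k f = S ∧ f 0 = a ∧ f (2 * k) = b by
    obtain ⟨k, f, hinj, hedge, hS', h0, hk⟩ := this
    have hk0 : k ≠ 0 := by
      rintro rfl
      simp [← hS', pathVerts] at hS
    exact ⟨k, f, ⟨Nat.one_le_iff_ne_zero.2 hk0, hinj, hedge⟩, hS', h0, hk⟩
  clear hS
  induction h with
  | nil a =>
    exact ⟨0, fun _ => a, by intros; omega, by simp, by simp [pathVerts], rfl, rfl⟩
  | @cons a b c d S he _ ha hc hac ih =>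
    obtain ⟨k, f, hinj, hedge, rfl, h0, hk⟩ := ih
    refine ⟨k + 1, consTwo a c f, consTwo_injOn hac ha hc hinj, ?_, pathVerts_consTwo a c k f,
      rfl, hk⟩
    rintro (_ | i) hi
    · simpa [consTwo, h0] using he
    · exact hedge i (Nat.lt_of_succ_lt_succ hi)

section Graph

variable {V : Type*} [Fintype V] (G G' : SimpleGraph V) [DecidableRel G.Adj] [DecidableRel G'.Adj]

/-- The vertices of `G` of degree at least `s`. -/
noncomputable def highDegree (s : ℝ) : Finset V := {w | s ≤ G.degree w}

variable {G} in
@[simp]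
theorem mem_highDegree {s : ℝ} {w : V} : w ∈ highDegree G s ↔ s ≤ G.degree w := by
  simp [highDegree]

theorem highDegree_anti {s t : ℝ} (hst : s ≤ t) : highDegree G t ⊆ highDegree G s :=
  fun _ hw => mem_highDegree.2 (hst.trans (mem_highDegree.1 hw))

theorem sum_card_neighborFinset_sdiff [DecidableEq V] (A : Finset V) :
    ∑ w, #(G.neighborFinset w \ A) = ∑ w ∈ Aᶜ, G.degree w := by
  simp only [← SimpleGraph.card_neighborFinset_eq_degree, card_eq_sum_ones]
  refine sum_comm' fun x y => ?_
  simp [G.adj_comm]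

/-- A vertex of degree at least `t` has at most `#(highDegree G s)` neighbours in `highDegree G s`;
its other neighbours have degree below `s`, so all these vertices together have at most
`s * card V` of them, counted with multiplicity. -/
theorem sum_degree_le {s t : ℝ} (hs : 0 ≤ s) (hst : s ≤ t) :
    ∑ w, (G.degree w : ℝ) ≤ #(highDegree G t) * #(highDegree G s) +
      (#(highDegree G s) - #(highDegree G t)) * t + 2 * s * Fintype.card V := by
  classical
  set A := highDegree G s
  set B := highDegree G t
  have hBA : B ⊆ A := highDegree_anti G hst
  have hout : ∑ w ∈ Aᶜ, (G.degree w : ℝ) ≤ s * Fintype.card V := calc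
    _ ≤ #Aᶜ • s := sum_le_card_nsmul _ _ _ fun w hw =>
      (not_le.1 (mt mem_highDegree.2 (mem_compl.1 hw))).le
    _ = s * #Aᶜ := by rw [nsmul_eq_mul, mul_comm]
    _ ≤ _ := by gcongr; exact card_le_univ _
  have hmid : ∑ w ∈ A \ B, (G.degree w : ℝ) ≤ (#A - #B) * t := calc
    _ ≤ #(A \ B) • t := sum_le_card_nsmul _ _ _ fun w hw =>
      (not_le.1 (mt mem_highDegree.2 (mem_sdiff.1 hw).2)).le
    _ = _ := by rw [nsmul_eq_mul, cast_card_sdiff hBA]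
  have hin : ∑ w ∈ B, (G.degree w : ℝ) ≤ #B * #A + s * Fintype.card V := calc
    _ ≤ ∑ w ∈ B, ((#A : ℝ) + #(G.neighborFinset w \ A)) := by
      refine sum_le_sum fun w _ => ?_
      rw [← SimpleGraph.card_neighborFinset_eq_degree, ← Nat.cast_add, Nat.cast_le,
        ← card_sdiff_add_card_inter _ A, add_comm]
      gcongr
      exact inter_subset_right
    _ = #B * #A + ∑ w ∈ B, (#(G.neighborFinset w \ A) : ℝ) := by
      rw [sum_add_distrib, sum_const, nsmul_eq_mul]
    _ ≤ #B * #A + ∑ w, (#(G.neighborFinset w \ A) : ℝ) := by gcongr; exact subset_univ _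
    _ = #B * #A + ∑ w ∈ Aᶜ, (G.degree w : ℝ) := by
      congr 1
      exact_mod_cast sum_card_neighborFinset_sdiff G A
    _ ≤ _ := by gcongr
  rw [← sum_add_sum_compl A, ← sum_sdiff hBA]
  linarith

variable {δ : ℝ} {G G'}

theorem le_card_highDegree_of_dense (hδ : 0 < δ)
    (hG : (25 / 64 + 10 * δ) * (Fintype.card V : ℝ) ^ 2 ≤ ∑ w, (G.degree w : ℝ)) :
    (5 / 8 + δ) * Fintype.card V ≤ #(highDegree G (δ * Fintype.card V)) := by
  have hsum := hG.trans (sum_degree_le G (s := δ * Fintype.card V) (by positivity) le_rfl)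
  set N : ℝ := (Fintype.card V : ℝ)
  have hmax : ∑ w, (G.degree w : ℝ) ≤ N ^ 2 := calc
    _ ≤ #(univ : Finset V) • N := sum_le_card_nsmul _ _ _ fun w _ =>
      Nat.cast_le.2 (G.degree_lt_card_verts w).le
    _ = N ^ 2 := by rw [nsmul_eq_mul, card_univ, sq]
  have hδN : δ * (δ * N ^ 2) ≤ δ * N ^ 2 := by
    gcongr
    nlinarith [mul_nonneg hδ.le (sq_nonneg N), sq_nonneg N]
  refine le_of_sq_le_sq ?_ (by positivity)
  nlinarith [mul_nonneg hδ.le (sq_nonneg N)]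

theorem le_card_highDegree_three_eighths_of_dense (hδ : 0 < δ)
    (hG : (25 / 64 + 10 * δ) * (Fintype.card V : ℝ) ^ 2 ≤ ∑ w, (G.degree w : ℝ)) :
    δ * Fintype.card V ≤ #(highDegree G ((3 / 8 + δ) * Fintype.card V)) := by
  have hst : δ * (Fintype.card V : ℝ) ≤ (3 / 8 + δ) * Fintype.card V := by gcongr; linarith
  have hsum := hG.trans (sum_degree_le G (by positivity) hst)
  set N : ℝ := (Fintype.card V : ℝ)
  set a : ℝ := (#(highDegree G (δ * N)) : ℝ)
  set b : ℝ := (#(highDegree G ((3 / 8 + δ) * N)) : ℝ)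
  have haN : a ≤ N := Nat.cast_le.2 (card_le_univ _)
  rcases (show 0 ≤ N by positivity).eq_or_lt with hN | hN
  · rw [← hN, mul_zero]
    positivity
  refine le_of_mul_le_mul_right ?_ hN
  have hba : b * a ≤ b * N := by gcongr
  have hat : a * ((3 / 8 + δ) * N) ≤ N * ((3 / 8 + δ) * N) := by gcongr
  have hbt : 0 ≤ b * ((3 / 8 + δ) * N) := by positivity
  nlinarith [mul_pos hδ (mul_pos hN hN), mul_pos hN hN]

variable [DecidableEq V]

theorem le_card_inter_of_card_add_le {A B : Finset V} {d p q : ℝ} (hA : p ≤ #A) (hB : q ≤ #B)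
    (h : Fintype.card V + d ≤ p + q) : d ≤ #(A ∩ B) := by
  have hsum : (#(A ∪ B) + #(A ∩ B) : ℝ) = #A + #B := mod_cast card_union_add_card_inter A B
  have hunion : (#(A ∪ B) : ℝ) ≤ Fintype.card V := mod_cast card_le_univ (A ∪ B)
  linarith

/-- Only the upper bound for `b` uses both graphs; inserted in `sum_degree_le`, it leaves a
quadratic in `a` whose maximum, at `a = 7 / 8 * N`, is below the density of `G`. -/
theorem card_highDegree_quadratic_lt {a b N δ : ℝ} (hδ : 0 < δ) (hN : 0 < N)
    (ha : (5 / 8 + δ) * N ≤ a) (haN : a ≤ N) (hb : b ≤ N - a + δ * N) :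
    b * a + (a - b) * ((3 / 8 + δ) * N) + 2 * (δ * N) * N < (25 / 64 + 10 * δ) * N ^ 2 := by
  have hb' : b * (a - (3 / 8 + δ) * N) ≤ (N - a + δ * N) * (a - (3 / 8 + δ) * N) :=
    mul_le_mul_of_nonneg_right hb (by nlinarith)
  nlinarith [sq_nonneg (a - 7 / 8 * N), mul_pos hδ (mul_pos hN hN),
    mul_nonneg hδ.le (mul_nonneg hN.le (sub_nonneg.2 haN)), sq_nonneg (δ * N)]

theorem le_card_highDegree_inter_of_card_le [Nonempty V] (hδ : 0 < δ)
    (hG : (25 / 64 + 10 * δ) * (Fintype.card V : ℝ) ^ 2 ≤ ∑ w, (G.degree w : ℝ))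
    (hle : #(highDegree G (δ * Fintype.card V)) ≤ #(highDegree G' (δ * Fintype.card V))) :
    δ * Fintype.card V ≤
      #(highDegree G' (δ * Fintype.card V) ∩ highDegree G ((3 / 8 + δ) * Fintype.card V)) := by
  by_contra! hlt
  have hst : δ * (Fintype.card V : ℝ) ≤ (3 / 8 + δ) * Fintype.card V := by gcongr; linarith
  have hb : (#(highDegree G ((3 / 8 + δ) * Fintype.card V)) : ℝ) ≤ Fintype.card V -
      #(highDegree G (δ * Fintype.card V)) + δ * Fintype.card V := by
    by_contra! hb
    exact hlt.not_ge (le_card_inter_of_card_add_le (Nat.cast_le.2 hle) hb.le (by linarith))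
  exact (card_highDegree_quadratic_lt hδ (by positivity)
    (le_card_highDegree_of_dense hδ hG) (mod_cast card_le_univ _) hb).not_ge
    (hG.trans (sum_degree_le G (by positivity) hst))

theorem le_card_highDegree_inter_or [Nonempty V] (hδ : 0 < δ)
    (hG : (25 / 64 + 10 * δ) * (Fintype.card V : ℝ) ^ 2 ≤ ∑ w, (G.degree w : ℝ))
    (hG' : (25 / 64 + 10 * δ) * (Fintype.card V : ℝ) ^ 2 ≤ ∑ w, (G'.degree w : ℝ)) :
    δ * Fintype.card V ≤
        #(highDegree G (δ * Fintype.card V) ∩ highDegree G' ((3 / 8 + δ) * Fintype.card V)) ∨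
      δ * Fintype.card V ≤
        #(highDegree G' (δ * Fintype.card V) ∩ highDegree G ((3 / 8 + δ) * Fintype.card V)) :=
  (le_total _ _).symm.imp (le_card_highDegree_inter_of_card_le hδ hG')
    (le_card_highDegree_inter_of_card_le hδ hG)

end Graph

section GreedyCounting

variable {α : Type*} [Fintype α] [DecidableEq α] {k : ℕ} {q : ℝ}

theorem pow_le_card_filter_forall_mem [Nonempty α] (hq : 0 ≤ q)
    (C : Fin k → (Fin k → α) → Finset α) (hC : ∀ i, DependsOn (C i) (Set.Iio i))
    (hcard : ∀ i f, (∀ j < i, f j ∈ C j f) → q ≤ #(C i f)) :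
    q ^ k ≤ #{f : Fin k → α | ∀ i, f i ∈ C i f} := by
  induction k with
  | zero => simp
  | succ k ih =>
    obtain ⟨a₀⟩ := ‹Nonempty α›
    set C₀ : Finset α := C 0 fun _ => a₀
    have hfirst (f : Fin (k + 1) → α) : C 0 f = C₀ := hC 0 fun i hi => absurd hi (Fin.not_lt_zero i)
    have htail (a : α) (ha : a ∈ C₀) :
        q ^ k ≤ #{f ∈ {f : Fin (k + 1) → α | ∀ i, f i ∈ C i f} | f 0 = a} := by
      refine (ih (fun i f => C i.succ (Fin.cons a f)) (fun i f g hfg => ?_)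
        fun i f hf => ?_).trans (Nat.cast_le.2 ?_)
      · refine hC _ fun j hj => ?_
        induction j using Fin.cases with
        | zero => rfl
        | succ j => simpa using hfg j (Fin.succ_lt_succ_iff.1 hj)
      · refine hcard _ _ fun j hj => ?_
        induction j using Fin.cases with
        | zero => simpa [hfirst] using ha
        | succ j => simpa using hf j (Fin.succ_lt_succ_iff.1 hj)
      · refine card_le_card_of_injOn (Fin.cons (α := fun _ => α) a) (fun f hf => ?_)
          fun f _ g _ hfg => (Fin.cons_inj.1 hfg).2
        simpa [Fin.forall_fin_succ, hfirst, ha] using hf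
    rw [card_eq_sum_card_fiberwise (f := fun f => f 0) (t := C₀), Nat.cast_sum, pow_succ']
    · calc q * q ^ k ≤ #C₀ * q ^ k := by
            gcongr
            exact hcard 0 _ fun i hi => absurd hi (Fin.not_lt_zero i)
        _ = #C₀ • q ^ k := (nsmul_eq_mul _ _).symm
        _ ≤ _ := card_nsmul_le_sum _ _ _ htail
    · intro f hf
      rw [← hfirst f]
      exact (mem_filter.1 hf).2 0

theorem pow_le_card_filter_injective [Nonempty α] (hq : 0 ≤ q) (W : Finset α)
    (C : Fin k → (Fin k → α) → Finset α) (hC : ∀ i, DependsOn (C i) (Set.Iio i))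
    (hcard : ∀ i f, (∀ j < i, f j ∈ C j f) → q + #W + k ≤ #(C i f)) :
    q ^ k ≤ #{f : Fin k → α | f.Injective ∧ (∀ i, f i ∉ W) ∧ ∀ i, f i ∈ C i f} := by
  set C' : Fin k → (Fin k → α) → Finset α := fun i f => C i f \ (W ∪ (Iio i).image f) with hC'
  refine (pow_le_card_filter_forall_mem hq C' (fun i f g hfg => ?_) fun i f hf => ?_).trans
    (Nat.cast_le.2 (card_le_card fun f hf => ?_))
  · have himage : (Iio i).image f = (Iio i).image g :=
      image_congr fun j hj => hfg j (by simpa using hj)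
    simp only [hC', hC i hfg, himage]
  · have hexcl : #(W ∪ (Iio i).image f) ≤ #W + k := calc
      _ ≤ #W + #((Iio i).image f) := card_union_le _ _
      _ ≤ #W + k := by gcongr; exact card_image_le.trans (by simp)
    have hsdiff : #(C i f) ≤ #(C' i f) + (#W + k) :=
      (Nat.sub_le_iff_le_add.1 (le_card_sdiff _ _)).trans (by gcongr)
    have hbound := hcard i f fun j hj => (mem_sdiff.1 (hf j hj)).1
    have : (#(C i f) : ℝ) ≤ #(C' i f) + (#W + k) := mod_cast hsdiff
    linarith
  · simp only [hC', mem_filter, mem_univ, true_and, mem_sdiff, mem_union, not_or, mem_image,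
      mem_Iio, not_exists, not_and] at hf ⊢
    refine ⟨fun i j hij => by_contra fun hne => ?_, fun i => (hf i).2.1, fun i => (hf i).1⟩
    exact (lt_or_gt_of_ne hne).elim (fun hlt => (hf j).2.2 i hlt hij)
      fun hlt => (hf i).2.2 j hlt hij.symm

end GreedyCounting

section Averaging

variable {ι κ : Type*} [Fintype κ] (R : ι → κ → Prop) [∀ t p, Decidable (R t p)]

theorem exists_mul_sum_le_sum_filter [Fintype ι] [Nonempty ι] {c : ℝ} {w : κ → ℝ}
    (hw : ∀ p, 0 ≤ w p) (hR : ∀ p, c * Fintype.card ι ≤ #{t | R t p}) :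
    ∃ t, c * ∑ p, w p ≤ ∑ p with R t p, w p := by
  have hsum : ∑ _t : ι, c * ∑ p, w p ≤ ∑ t, ∑ p with R t p, w p := calc
    _ = ∑ p, c * Fintype.card ι * w p := by
      rw [sum_const, card_univ, nsmul_eq_mul, ← mul_sum]
      ring
    _ ≤ ∑ p, #{t | R t p} * w p := by gcongr with p; exacts [hw p, hR p]
    _ = ∑ p, ∑ t with R t p, w p := by simp only [sum_const, nsmul_eq_mul]
    _ = _ := by simp only [sum_filter]; exact sum_comm
  obtain ⟨t, -, ht⟩ := exists_le_of_sum_le univ_nonempty hsum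
  exact ⟨t, ht⟩

/-- The number of members of `F` that are related to `p`. -/
def hits (F : Finset ι) (p : κ) : ℕ := #{t ∈ F | R t p}

/-- The potential used to choose the members of `F` one by one: if it is small, then every `p` is
related to many members of `F`. -/
noncomputable def hitPotential (F : Finset ι) : ℝ := ∑ p, Real.exp (-hits R F p)

variable {R}

theorem hitPotential_insert_le [DecidableEq ι] {F : Finset ι} {t : ι} (ht : t ∉ F) {c : ℝ}
    (hc : c * hitPotential R F ≤ ∑ p with R t p, Real.exp (-hits R F p)) :
    hitPotential R (insert t F) ≤ Real.exp (-(c / 2)) * hitPotential R F := by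
  have hexp_half : Real.exp (-1) ≤ 1 / 2 := by
    rw [Real.exp_neg, one_div]
    exact inv_anti₀ two_pos (by linarith [Real.add_one_le_exp 1])
  have hterm (p : κ) : Real.exp (-hits R (insert t F) p) ≤
      Real.exp (-hits R F p) - (if R t p then Real.exp (-hits R F p) else 0) / 2 := by
    unfold hits
    rw [filter_insert]
    split_ifs with hp
    · rw [card_insert_of_notMem fun h => ht (mem_of_mem_filter t h), Nat.cast_succ, neg_add,
        Real.exp_add]
      nlinarith [Real.exp_pos (-(#{t ∈ F | R t p} : ℝ))]
    · simp
  have hpot : 0 ≤ hitPotential R F := sum_nonneg fun _ _ => (Real.exp_pos _).le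
  calc hitPotential R (insert t F)
      ≤ hitPotential R F - (∑ p with R t p, Real.exp (-hits R F p)) / 2 := by
        rw [sum_filter, sum_div, hitPotential, hitPotential, ← sum_sub_distrib]
        exact sum_le_sum fun p _ => hterm p
    _ ≤ (-(c / 2) + 1) * hitPotential R F := by linarith
    _ ≤ _ := by gcongr; exact Real.add_one_le_exp _

theorem le_hits_of_hitPotential_le {F : Finset ι} {b : ℝ} (h : hitPotential R F ≤ Real.exp (-b))
    (p : κ) : b ≤ hits R F p := by
  have hp : Real.exp (-hits R F p) ≤ hitPotential R F :=
    single_le_sum (f := fun p => Real.exp (-hits R F p)) (fun _ _ => (Real.exp_pos _).le)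
      (mem_univ p)
  exact neg_le_neg_iff.1 (Real.exp_le_exp.1 (hp.trans h))

end Averaging

section Links

variable {V : Type*} [DecidableEq V] {H : Finset (Finset V)} {v : V}

/-- The link of `v`: the graph whose edges are the pairs that form an edge of `H` with `v`. -/
def linkGraph (H : Finset (Finset V)) (v : V) : SimpleGraph V where
  Adj u w := u ≠ w ∧ {v, u, w} ∈ H
  symm := ⟨fun u w h => ⟨h.1.symm, pair_comm u w ▸ h.2⟩⟩
  loopless := ⟨fun _ h => h.1 rfl⟩

instance : DecidableRel (linkGraph H v).Adj := fun u w => inferInstanceAs (Decidable (u ≠ w ∧ _))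

variable [Fintype V]

theorem two_mul_card_filter_mem_le_sum_degree (hH : ∀ e ∈ H, #e = 3) (v : V) :
    2 * #{e ∈ H | v ∈ e} ≤ ∑ w, (linkGraph H v).degree w := by
  rw [SimpleGraph.sum_degrees_eq_twice_card_edges]
  gcongr
  refine card_le_card_of_surjOn (fun e => insert v e.toFinset) fun e he => ?_
  rw [mem_coe, mem_filter] at he
  have hcard : #(e.erase v) = 2 := by rw [card_erase_of_mem he.2, hH e he.1]
  obtain ⟨a, b, hab, hpair⟩ := card_eq_two.1 hcard
  have he_eq : {v, a, b} = e := by rw [← hpair, insert_erase he.2]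
  refine ⟨s(a, b), ?_, by simpa [Sym2.toFinset_mk_eq] using he_eq⟩
  rw [mem_coe, SimpleGraph.mem_edgeFinset, SimpleGraph.mem_edgeSet]
  exact ⟨hab, he_eq ▸ he.1⟩

/-- Every link has edge density at least `25 / 64 + 10 * δ`; the threshold is `(5 / 8) ^ 2`. -/
def DenseLinks (H : Finset (Finset V)) (δ : ℝ) : Prop :=
  ∀ v, (25 / 64 + 10 * δ) * (Fintype.card V : ℝ) ^ 2 ≤ ∑ w, ((linkGraph H v).degree w : ℝ)

theorem denseLinks_of_le_degree {γ : ℝ} (hγ : 0 < γ) (hH : ∀ e ∈ H, #e = 3)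
    (hcard : 4 * (5 / 8 + γ) ^ 2 / γ ≤ Fintype.card V)
    (hdeg : ∀ v, (5 / 8 + γ) ^ 2 * ((Fintype.card V).choose 2 : ℝ) ≤ #{e ∈ H | v ∈ e}) :
    DenseLinks H (γ / 10) := by
  intro v
  have htwice : 2 * (#{e ∈ H | v ∈ e} : ℝ) ≤ ∑ w, ((linkGraph H v).degree w : ℝ) :=
    mod_cast two_mul_card_filter_mem_le_sum_degree hH v
  have hv := hdeg v
  rw [Nat.cast_choose_two] at hv
  set N : ℝ := (Fintype.card V : ℝ)
  have hlower : (5 / 8 + γ) ^ 2 * N ≤ γ / 4 * N * N := by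
    rw [div_le_iff₀ hγ] at hcard
    gcongr
    linarith
  nlinarith [mul_nonneg (sq_nonneg γ) (sq_nonneg N)]

/-- The vertices whose degree in the link of `v` is at least `c * card V`. -/
noncomputable def linkHigh (H : Finset (Finset V)) (c : ℝ) (v : V) : Finset V :=
  highDegree (linkGraph H v) (c * Fintype.card V)

/-- The neighbours of `w` in the link of `u`. -/
def linkNeighbors (H : Finset (Finset V)) (u w : V) : Finset V := (linkGraph H u).neighborFinset w

theorem mem_of_mem_linkNeighbors {u w z : V} (h : z ∈ linkNeighbors H u w) : {u, w, z} ∈ H :=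
  ((SimpleGraph.mem_neighborFinset _ _ _).1 h).2

theorem le_card_linkNeighbors {c : ℝ} {u w : V} (h : w ∈ linkHigh H c u) :
    c * Fintype.card V ≤ #(linkNeighbors H u w) := by
  rw [linkNeighbors, SimpleGraph.card_neighborFinset_eq_degree]
  exact mem_highDegree.1 h

end Links

section Absorbers

variable {V : Type*} [DecidableEq V] {H : Finset (Finset V)} {x y : V} {v : Fin 7 → V}

/-- `v` is an absorber for `(x, y)`: the loose path `v 5, v 1, v 4 | v 0 | v 2, v 3, v 6` can be
rerouted through `x` and `y` as `v 5, v 4, v 1 | x | v 0 | y | v 3, v 2, v 6`. The seven vertices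
are listed in the order in which `absorberCandidates` chooses them. -/
structure IsAbsorber (H : Finset (Finset V)) (x y : V) (v : Fin 7 → V) : Prop where
  injective : v.Injective
  left_mem : {x, v 0, v 1} ∈ H
  right_mem : {y, v 0, v 3} ∈ H
  middle_mem : {v 0, v 2, v 4} ∈ H
  start_mem : {v 1, v 4, v 5} ∈ H
  finish_mem : {v 2, v 3, v 6} ∈ H

namespace IsAbsorber

theorem loosePathOn (h : IsAbsorber H x y v) : LoosePathOn H (v 5) (v 6) (univ.image v) := by
  have himage : univ.image v = {v 5, v 1, v 4, v 0, v 2, v 3, v 6} := by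
    ext z
    simp only [mem_image_univ_iff_mem_range, Set.mem_range, Fin.exists_fin_succ]
    grind
  have hstart : {v 5, v 1, v 4} ∈ H := by convert h.start_mem using 1; grind
  have hmiddle : {v 4, v 0, v 2} ∈ H := by convert h.middle_mem using 1; grind
  rw [himage]
  refine .cons hstart (.cons hmiddle (.cons h.finish_mem (.nil _) ?_ ?_ ?_) ?_ ?_ ?_) ?_ ?_ ?_ <;>
    simp [h.injective.eq_iff]

theorem loosePathOn_union (h : IsAbsorber H x y v) (hxy : x ≠ y) (hx : x ∉ univ.image v)
    (hy : y ∉ univ.image v) : LoosePathOn H (v 5) (v 6) (univ.image v ∪ {x, y}) := by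
  have hunion : univ.image v ∪ {x, y} = {v 5, v 4, v 1, x, v 0, y, v 3, v 2, v 6} := by
    ext z
    simp only [mem_union, mem_image_univ_iff_mem_range, Set.mem_range, Fin.exists_fin_succ,
      mem_insert, mem_singleton]
    grind
  have hstart : {v 5, v 4, v 1} ∈ H := by convert h.start_mem using 1; grind
  have hleft : {v 1, x, v 0} ∈ H := by convert h.left_mem using 1; grind
  have hright : {v 0, y, v 3} ∈ H := by convert h.right_mem using 1; grind
  have hfinish : {v 3, v 2, v 6} ∈ H := by convert h.finish_mem using 1; grind
  have hvx (i : Fin 7) : v i ≠ x := fun hi => hx (hi ▸ mem_image_of_mem v (mem_univ i))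
  have hvy (i : Fin 7) : v i ≠ y := fun hi => hy (hi ▸ mem_image_of_mem v (mem_univ i))
  rw [hunion]
  refine .cons hstart (.cons hleft (.cons hright (.cons hfinish (.nil _) ?_ ?_ ?_) ?_ ?_ ?_)
    ?_ ?_ ?_) ?_ ?_ ?_ <;>
    simp [h.injective.eq_iff, hvx, hvy, (hvx _).symm, (hvy _).symm, hxy]

end IsAbsorber

/-- `v` is an absorber for the unordered pair `{p.1, p.2}`. -/
def AbsorbsPair (H : Finset (Finset V)) (v : Fin 7 → V) (p : V × V) : Prop :=
  IsAbsorber H p.1 p.2 v ∨ IsAbsorber H p.2 p.1 v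

noncomputable instance (v : Fin 7 → V) (p : V × V) : Decidable (AbsorbsPair H v p) :=
  Classical.propDecidable _

variable [Fintype V] {δ : ℝ}

/-- The set from which the `i`-th vertex of an absorber for `(x, y)` may be chosen, given the
earlier vertices of `f`. It keeps the sets of the later vertices large. -/
noncomputable def absorberCandidates (H : Finset (Finset V)) (δ : ℝ) (x y : V) (i : Fin 7)
    (f : Fin 7 → V) : Finset V :=
  match i with
  | 0 => linkHigh H δ x ∩ linkHigh H (3 / 8 + δ) y
  | 1 => linkNeighbors H x (f 0)
  | 2 => linkHigh H (3 / 8 + δ) (f 0)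
  | 3 => linkNeighbors H y (f 0) ∩ linkHigh H δ (f 2)
  | 4 => linkNeighbors H (f 0) (f 2) ∩ linkHigh H δ (f 1)
  | 5 => linkNeighbors H (f 1) (f 4)
  | 6 => linkNeighbors H (f 2) (f 3)

theorem dependsOn_absorberCandidates (i : Fin 7) :
    DependsOn (absorberCandidates H δ x y i) (Set.Iio i) := by
  intro f g hfg
  fin_cases i <;> simp +decide [absorberCandidates, hfg]

theorem isAbsorber_of_mem_absorberCandidates (hinj : v.Injective)
    (hv : ∀ i, v i ∈ absorberCandidates H δ x y i v) : IsAbsorber H x y v where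
  injective := hinj
  left_mem := mem_of_mem_linkNeighbors (hv 1)
  right_mem := mem_of_mem_linkNeighbors (mem_inter.1 (hv 3)).1
  middle_mem := mem_of_mem_linkNeighbors (mem_inter.1 (hv 4)).1
  start_mem := mem_of_mem_linkNeighbors (hv 5)
  finish_mem := mem_of_mem_linkNeighbors (hv 6)

theorem le_card_absorberCandidates (hδ : 0 < δ) (hH : DenseLinks H δ)
    (hxy : δ * Fintype.card V ≤ #(linkHigh H δ x ∩ linkHigh H (3 / 8 + δ) y)) (i : Fin 7)
    (f : Fin 7 → V) (hf : ∀ j < i, f j ∈ absorberCandidates H δ x y j f) :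
    δ * Fintype.card V ≤ #(absorberCandidates H δ x y i f) := by
  have inter_large {u w z : V} (hz : z ∈ linkHigh H (3 / 8 + δ) u) :
      δ * Fintype.card V ≤ #(linkNeighbors H u z ∩ linkHigh H δ w) :=
    le_card_inter_of_card_add_le (le_card_linkNeighbors hz)
      (le_card_highDegree_of_dense hδ (hH w)) (by nlinarith)
  fin_cases i
  · exact hxy
  · exact le_card_linkNeighbors (mem_inter.1 (hf 0 (by decide))).1
  · exact le_card_highDegree_three_eighths_of_dense hδ (hH _)
  · exact inter_large (mem_inter.1 (hf 0 (by decide))).2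
  · exact inter_large (hf 2 (by decide))
  · exact le_card_linkNeighbors (mem_inter.1 (hf 4 (by decide))).2
  · exact le_card_linkNeighbors (mem_inter.1 (hf 3 (by decide))).2

theorem pow_le_card_filter_absorbs (hδ : 0 < δ) (hH : DenseLinks H δ) {W : Finset V}
    (hW : #W + 7 ≤ δ / 2 * Fintype.card V) (p : V × V) :
    (δ / 2 * Fintype.card V) ^ 7 ≤ #{v : Fin 7 → V | (∀ i, v i ∉ W) ∧ AbsorbsPair H v p} := by
  classical
  have : Nonempty V := ⟨p.1⟩
  have one_sided {x y : V}
      (hxy : δ * Fintype.card V ≤ #(linkHigh H δ x ∩ linkHigh H (3 / 8 + δ) y)) :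
      (δ / 2 * Fintype.card V) ^ 7 ≤
        #{v : Fin 7 → V | (∀ i, v i ∉ W) ∧ IsAbsorber H x y v} := by
    refine (pow_le_card_filter_injective (by positivity) W (absorberCandidates H δ x y)
      dependsOn_absorberCandidates fun i f hf => ?_).trans
      (Nat.cast_le.2 (card_le_card (monotone_filter_right _ ?_)))
    · have := le_card_absorberCandidates hδ hH hxy i f hf
      push_cast
      linarith
    · exact fun v _ hv => ⟨hv.2.1, isAbsorber_of_mem_absorberCandidates hv.1 hv.2.2⟩
  rcases le_card_highDegree_inter_or hδ (hH p.1) (hH p.2) with h | h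
  · refine (one_sided h).trans (Nat.cast_le.2 (card_le_card (monotone_filter_right _ ?_)))
    exact fun v _ hv => ⟨hv.1, .inl hv.2⟩
  · refine (one_sided h).trans (Nat.cast_le.2 (card_le_card (monotone_filter_right _ ?_)))
    exact fun v _ hv => ⟨hv.1, .inr hv.2⟩

theorem exists_loosePathOn_of_ne (hδ : 0 < δ) (hH : DenseLinks H δ) {W : Finset V}
    (hW : #W + 3 < δ * Fintype.card V) {a b : V} (hab : a ≠ b) (ha : a ∈ W) (hb : b ∈ W) :
    ∃ T, LoosePathOn H a b T ∧ T ∩ W ⊆ {a, b} ∧ #T ≤ 5 := by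
  have : Nonempty V := ⟨a⟩
  set C : Fin 3 → (Fin 3 → V) → Finset V := fun i f => match i with
    | 0 => linkHigh H δ a ∩ linkHigh H δ b
    | 1 => linkNeighbors H a (f 0)
    | 2 => linkNeighbors H b (f 0) with hC
  have hcount := pow_le_card_filter_injective (q := δ * Fintype.card V - (#W + 3)) (by linarith) W C
    (fun i f g hfg => by fin_cases i <;> simp +decide [hC, hfg 0]) fun i f hf => ?_
  · have hpos : (0 : ℝ) < #{f : Fin 3 → V | f.Injective ∧ (∀ i, f i ∉ W) ∧ ∀ i, f i ∈ C i f} :=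
      (pow_pos (by linarith) 3).trans_le hcount
    obtain ⟨f, hf⟩ := card_pos.1 (Nat.cast_pos.1 hpos)
    obtain ⟨hinj, hfW, hfC⟩ := (mem_filter.1 hf).2
    have ha1 : {a, f 1, f 0} ∈ H := by convert mem_of_mem_linkNeighbors (hfC 1) using 1; grind
    have hb2 : {f 0, f 2, b} ∈ H := by convert mem_of_mem_linkNeighbors (hfC 2) using 1; grind
    have hfa (i : Fin 3) : f i ≠ a := fun h => hfW i (h ▸ ha)
    have hfb (i : Fin 3) : f i ≠ b := fun h => hfW i (h ▸ hb)
    have hpath : LoosePathOn H a b {a, f 1, f 0, f 2, b} := by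
      refine .cons ha1 (.cons hb2 (.nil b) ?_ ?_ ?_) ?_ ?_ ?_ <;>
        simp [hinj.eq_iff, hab, hfb, (hfa _).symm]
    exact ⟨_, hpath, by simp [insert_inter_of_mem, ha, hb, hfW], card_le_five⟩
  · have hcard : δ * Fintype.card V ≤ #(C i f) := by
      fin_cases i
      · exact le_card_inter_of_card_add_le (le_card_highDegree_of_dense hδ (hH a))
          (le_card_highDegree_of_dense hδ (hH b)) (by nlinarith)
      · exact le_card_linkNeighbors (mem_inter.1 (hf 0 (by decide))).1
      · exact le_card_linkNeighbors (mem_inter.1 (hf 0 (by decide))).2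
    push_cast
    linarith

end Absorbers

section AbsorberChains

variable {V : Type*} [DecidableEq V] {H : Finset (Finset V)} {a b c x y : V} {S T U : Finset V}
  {F : Finset (Fin 7 → V)} {t : Fin 7 → V}

/-- `AbsorberChain H a b S F` says that some loose path of `H` from `a` to `b` with vertex set `S`
contains the pairwise disjoint absorbers in `F` as segments. -/
inductive AbsorberChain (H : Finset (Finset V)) (a : V) :
    V → Finset V → Finset (Fin 7 → V) → Prop
  | nil : AbsorberChain H a a {a} ∅
  | append {b c : V} {S T : Finset V} {F : Finset (Fin 7 → V)} (h : AbsorberChain H a b S F)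
      (hT : LoosePathOn H b c T) (hST : S ∩ T ⊆ {b}) : AbsorberChain H a c (S ∪ T) F
  | absorber {S : Finset V} {F : Finset (Fin 7 → V)} {x y : V} {v : Fin 7 → V}
      (h : AbsorberChain H a (v 5) S F) (hv : IsAbsorber H x y v)
      (hS : S ∩ univ.image v ⊆ {v 5}) (hF : v ∉ F) :
      AbsorberChain H a (v 6) (S ∪ univ.image v) (insert v F)

namespace AbsorberChain

theorem loosePathOn (h : AbsorberChain H a b S F) : LoosePathOn H a b S := by
  induction h with
  | nil => exact .nil a
  | append _ hT hST ih => exact ih.trans hT hST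
  | absorber _ hv hS _ ih => exact ih.trans hv.loosePathOn hS

theorem image_subset (h : AbsorberChain H a b S F) (ht : t ∈ F) : univ.image t ⊆ S := by
  induction h with
  | nil => exact absurd ht (notMem_empty t)
  | append _ _ _ ih => exact (ih ht).trans subset_union_left
  | absorber _ _ _ _ ih =>
    rcases mem_insert.1 ht with rfl | ht
    · exact subset_union_right
    · exact (ih ht).trans subset_union_left

theorem absorb (h : AbsorberChain H a b S F) (ht : t ∈ F) (hxy : IsAbsorber H x y t)
    (hne : x ≠ y) (hx : x ∉ S) (hy : y ∉ S) :
    AbsorberChain H a b (S ∪ {x, y}) (F.erase t) := by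
  induction h with
  | nil => exact absurd ht (notMem_empty t)
  | @append b c S T F _ hT hST ih =>
    rw [notMem_union] at hx hy
    rw [union_right_comm]
    refine (ih ht hx.1 hy.1).append hT ?_
    rwa [union_inter_distrib_right, insert_inter_of_notMem hx.2, singleton_inter_of_notMem hy.2,
      union_empty]
  | @absorber S F x' y' v h hv hS hF ih =>
    rw [notMem_union] at hx hy
    rcases mem_insert.1 ht with rfl | ht
    · rw [erase_insert hF, union_assoc]
      refine h.append (hxy.loosePathOn_union hne hx.2 hy.2) ?_
      rwa [inter_union_distrib_left, inter_insert_of_notMem hx.1, inter_singleton_of_notMem hy.1,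
        union_empty]
    · rw [union_right_comm, erase_insert_of_ne (ne_of_mem_of_not_mem ht hF).symm]
      refine (ih ht hx.1 hy.1).absorber hv ?_ fun hv => hF (mem_of_mem_erase hv)
      rwa [union_inter_distrib_right, insert_inter_of_notMem hx.2, singleton_inter_of_notMem hy.2,
        union_empty]

theorem absorb_pair (h : AbsorberChain H a b S F) (ht : t ∈ F) (hxy : AbsorbsPair H t (x, y))
    (hne : x ≠ y) (hx : x ∉ S) (hy : y ∉ S) :
    AbsorberChain H a b (S ∪ {x, y}) (F.erase t) := by
  rcases hxy with hxy | hxy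
  · exact h.absorb ht hxy hne hx hy
  · exact pair_comm x y ▸ h.absorb ht hxy hne.symm hy hx

theorem loosePathOn_union (h : AbsorberChain H a b S F) {r : ℕ} (hU : #U = 2 * r)
    (hSU : Disjoint S U) (hr : ∀ p, r ≤ hits (AbsorbsPair H) F p) :
    LoosePathOn H a b (S ∪ U) := by
  induction r generalizing S U F with
  | zero => simpa [card_eq_zero.1 hU] using h.loosePathOn
  | succ r ih =>
    obtain ⟨x, hx, y, hy, hne⟩ := one_lt_card.1 (show 1 < #U by omega)
    obtain ⟨t, ht⟩ := card_pos.1 (r.succ_pos.trans_le (hr (x, y)))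
    obtain ⟨htF, hxy⟩ := mem_filter.1 ht
    have hxyU : {x, y} ⊆ U := by simp [insert_subset_iff, hx, hy]
    have hrest := ih (U := U \ {x, y})
      (h.absorb_pair htF hxy hne (disjoint_right.1 hSU hx) (disjoint_right.1 hSU hy))
      (by rw [card_sdiff_of_subset hxyU, card_pair hne]; omega)
      (disjoint_union_left.2 ⟨hSU.mono_right sdiff_subset, disjoint_sdiff⟩)
      fun p => ?_
    · rwa [union_assoc, union_sdiff_of_subset hxyU] at hrest
    · unfold hits at hr ⊢
      rw [filter_erase]
      exact Nat.le_sub_one_of_lt (hr p) |>.trans pred_card_le_card_erase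

variable [Fintype V] {δ : ℝ}

theorem exists_insert (hδ : 0 < δ) (hH : DenseLinks H δ) (h : AbsorberChain H a b S F)
    (hS : #S + 10 < δ * Fintype.card V) (ht : IsAbsorber H x y t) (htS : ∀ i, t i ∉ S) :
    ∃ S', AbsorberChain H a (t 6) S' (insert t F) ∧ #S' ≤ #S + 12 := by
  have hbS : b ∈ S := h.loosePathOn.right_mem
  have hbt (i : Fin 7) : b ≠ t i := fun hb => htS i (hb ▸ hbS)
  have htF : t ∉ F := fun htF => htS 0 (h.image_subset htF (mem_image_of_mem t (mem_univ 0)))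
  have himage : #(univ.image t) ≤ 7 := card_image_le
  have hW : #(S ∪ univ.image t) ≤ #S + 7 := (card_union_le _ _).trans (by gcongr)
  have hW' : (#(S ∪ univ.image t) : ℝ) ≤ #S + 7 := mod_cast hW
  obtain ⟨T, hT, hTW, hTcard⟩ := exists_loosePathOn_of_ne hδ hH (W := S ∪ univ.image t)
    (by linarith) (hbt 5) (by simp [hbS]) (by simp)
  have hST : S ∩ T ⊆ {b} := by
    intro z hz
    have := hTW (show z ∈ T ∩ (S ∪ univ.image t) by grind)
    grind
  have hSTt : (S ∪ T) ∩ univ.image t ⊆ {t 5} := by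
    intro z hz
    have := hTW (show z ∈ T ∩ (S ∪ univ.image t) by grind)
    grind
  refine ⟨_, (h.append hT hST).absorber ht hSTt htF, ?_⟩
  calc #(S ∪ T ∪ univ.image t) ≤ #S + #T + #(univ.image t) :=
        (card_union_le _ _).trans (by gcongr; exact card_union_le _ _)
    _ ≤ #S + 12 := by omega

end AbsorberChain

variable [Fintype V] {δ : ℝ}

theorem exists_absorber_mul_hitPotential_le [Nonempty V] (hδ : 0 < δ) (hH : DenseLinks H δ)
    {W : Finset V} (hW : #W + 7 ≤ δ / 2 * Fintype.card V) (F : Finset (Fin 7 → V)) :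
    ∃ x y t, IsAbsorber H x y t ∧ (∀ i, t i ∉ W) ∧ (δ / 2) ^ 7 * hitPotential (AbsorbsPair H) F ≤
      ∑ p with AbsorbsPair H t p, Real.exp (-hits (AbsorbsPair H) F p) := by
  obtain ⟨t, ht⟩ := exists_mul_sum_le_sum_filter
    (fun (t : Fin 7 → V) p => (∀ i, t i ∉ W) ∧ AbsorbsPair H t p) (c := (δ / 2) ^ 7)
    (w := fun p => Real.exp (-hits (AbsorbsPair H) F p)) (fun _ => (Real.exp_pos _).le) fun p => by
      rw [Fintype.card_fun, Fintype.card_fin, Nat.cast_pow, ← mul_pow]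
      exact pow_le_card_filter_absorbs hδ hH hW p
  have hpot : 0 < ∑ p, Real.exp (-hits (AbsorbsPair H) F p) :=
    sum_pos (fun _ _ => Real.exp_pos _) univ_nonempty
  obtain ⟨p, hp, -⟩ := exists_ne_zero_of_sum_ne_zero
    ((mul_pos (pow_pos (half_pos hδ) 7) hpot).trans_le ht).ne'
  obtain ⟨-, htW, htp⟩ := mem_filter.1 hp
  obtain ⟨x, y, hxy⟩ : ∃ x y, IsAbsorber H x y t := htp.elim (⟨_, _, ·⟩) (⟨_, _, ·⟩)
  exact ⟨x, y, t, hxy, htW, by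
    simpa only [hitPotential, htW, not_false_eq_true, implies_true, true_and] using ht⟩

theorem exists_absorberChain [Nonempty V] (hδ : 0 < δ) (hH : DenseLinks H δ) {m : ℕ}
    (hm : 12 * m + 20 ≤ δ / 2 * Fintype.card V) :
    ∃ a b S F, AbsorberChain H a b S F ∧ #S ≤ 12 * m + 1 ∧
      hitPotential (AbsorbsPair H) F ≤
        Real.exp (-((δ / 2) ^ 7 / 2)) ^ m * (Fintype.card V : ℝ) ^ 2 := by
  induction m with
  | zero =>
    obtain ⟨a⟩ := ‹Nonempty V›
    exact ⟨a, a, {a}, ∅, .nil, by simp, by simp [hitPotential, hits, sq]⟩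
  | succ m ih =>
    push_cast at hm
    obtain ⟨a, b, S, F, h, hS, hpot⟩ := ih (by linarith)
    have hS' : (#S : ℝ) ≤ 12 * m + 1 := mod_cast hS
    obtain ⟨x, y, t, ht, htS, hgain⟩ :=
      exists_absorber_mul_hitPotential_le hδ hH (W := S) (by linarith) F
    have htF : t ∉ F := fun htF => htS 0 (h.image_subset htF (mem_image_of_mem t (mem_univ 0)))
    obtain ⟨S', h', hcard⟩ := h.exists_insert hδ hH (by linarith) ht htS
    refine ⟨a, t 6, S', insert t F, h', by omega, ?_⟩
    calc hitPotential (AbsorbsPair H) (insert t F)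
        ≤ Real.exp (-((δ / 2) ^ 7 / 2)) * hitPotential (AbsorbsPair H) F :=
          hitPotential_insert_le htF hgain
      _ ≤ Real.exp (-((δ / 2) ^ 7 / 2)) *
          (Real.exp (-((δ / 2) ^ 7 / 2)) ^ m * (Fintype.card V : ℝ) ^ 2) := by gcongr
      _ = _ := by ring

theorem exists_absorberChain_le_hits [Nonempty V] (hδ : 0 < δ) (hH : DenseLinks H δ) {m : ℕ}
    (hm : 12 * m + 20 ≤ δ / 2 * Fintype.card V) :
    ∃ a b S F, AbsorberChain H a b S F ∧ #S ≤ 12 * m + 1 ∧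
      ∀ p, (δ / 2) ^ 7 / 2 * m - 2 * Real.log (Fintype.card V) ≤ hits (AbsorbsPair H) F p := by
  obtain ⟨a, b, S, F, h, hS, hpot⟩ := exists_absorberChain hδ hH hm
  refine ⟨a, b, S, F, h, hS, le_hits_of_hitPotential_le (hpot.trans_eq ?_)⟩
  have hcard : (0 : ℝ) < Fintype.card V := by positivity
  rw [← Real.exp_log (pow_pos hcard 2), Real.log_pow, ← Real.exp_nat_mul, ← Real.exp_add]
  congr 1
  push_cast
  ring

end AbsorberChains

theorem exists_absorbing_isLoosePath {V : Type} [Fintype V] [DecidableEq V] [Nonempty V]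
    {H : Finset (Finset V)} {δ β : ℝ} {m : ℕ} (hδ : 0 < δ) (hβ : 0 < β) (hH : DenseLinks H δ)
    (hm : 12 * m + 20 ≤ δ / 2 * Fintype.card V)
    (hβm : β * Fintype.card V ≤ (δ / 2) ^ 7 * m - 4 * Real.log (Fintype.card V)) :
    ∃ (k : ℕ) (f : ℕ → V), IsLoosePath H k f ∧ 2 * k ≤ 12 * m ∧
      ∀ U : Finset V, Disjoint U (pathVerts k f) → #U ≤ β * Fintype.card V → Even #U →
        ∃ (k' : ℕ) (f' : ℕ → V), IsLoosePath H k' f' ∧ pathVerts k' f' = pathVerts k f ∪ U ∧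
          ({f' 0, f' (2 * k')} : Finset V) = {f 0, f (2 * k)} := by
  obtain ⟨a, b, S, F, h, hS, hhits⟩ := exists_absorberChain_le_hits hδ hH hm
  have hhits' (p : V × V) : β * Fintype.card V ≤ 2 * hits (AbsorbsPair H) F p := by
    linarith [hhits p]
  have hScard : 1 < #S := by
    have hpos : 0 < hits (AbsorbsPair H) F (a, a) := by
      have : 0 < β * Fintype.card V := by positivity
      exact_mod_cast show (0 : ℝ) < hits (AbsorbsPair H) F (a, a) by linarith [hhits' (a, a)]
    obtain ⟨t, ht⟩ := card_pos.1 hpos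
    obtain ⟨htF, htp⟩ := mem_filter.1 ht
    have hinj : t.Injective := htp.elim (·.injective) (·.injective)
    calc 1 < #(univ.image t) := by simp [card_image_of_injective _ hinj]
      _ ≤ #S := card_le_card (h.image_subset htF)
  obtain ⟨k, f, hf, rfl, rfl, rfl⟩ := h.loosePathOn.exists_isLoosePath hScard
  refine ⟨k, f, hf, by rw [hf.card_pathVerts] at hS; omega, fun U hU hUcard hUeven => ?_⟩
  obtain ⟨r, hr⟩ := hUeven.exists_two_nsmul
  rw [smul_eq_mul] at hr
  have hrhits (p : V × V) : r ≤ hits (AbsorbsPair H) F p := by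
    have hbound := hUcard.trans (hhits' p)
    rw [hr] at hbound
    have : 2 * r ≤ 2 * hits (AbsorbsPair H) F p := mod_cast hbound
    omega
  have hSU : 1 < #(pathVerts k f ∪ U) := hScard.trans_le (card_le_card subset_union_left)
  obtain ⟨k', f', hf', hverts, h0, hk'⟩ :=
    (h.loosePathOn_union hr hU.symm hrhits).exists_isLoosePath hSU
  exact ⟨k', f', hf', hverts, by rw [h0, hk']⟩

theorem exists_eventually_chain_length {c η : ℝ} (hc : 0 < c) (hη : 0 < η) :
    ∃ β : ℝ, 0 < β ∧ ∀ᶠ n : ℕ in Filter.atTop, ∃ m : ℕ,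
      12 * m + 20 ≤ η * n ∧ β * n ≤ c * m - 4 * Real.log n := by
  refine ⟨c * η / 80, by positivity, ?_⟩
  have hlog : ∀ᶠ n : ℕ in Filter.atTop, Real.log n ≤ c * η / 320 * n := by
    filter_upwards [tendsto_natCast_atTop_atTop.eventually
      (Real.isLittleO_log_id_atTop.bound (show 0 < c * η / 320 by positivity))] with n hn
    simpa using (le_abs_self _).trans hn
  have hlarge : ∀ᶠ n : ℕ in Filter.atTop, 50 / η ≤ n :=
    tendsto_natCast_atTop_atTop.eventually_ge_atTop _
  filter_upwards [hlog, hlarge] with n hlog hlarge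
  rw [div_le_iff₀ hη] at hlarge
  have hfloor : (⌊η * n / 20⌋₊ : ℝ) ≤ η * n / 20 := Nat.floor_le (by positivity)
  have hlt : η * n / 40 ≤ ⌊η * n / 20⌋₊ := by linarith [Nat.lt_floor_add_one (η * n / 20)]
  exact ⟨⌊η * n / 20⌋₊, by linarith, by nlinarith⟩

theorem absorbing_lemma (γ : ℝ) (hγ : 0 < γ) :
    ∃ β : ℝ, 0 < β ∧ ∃ n₀ : ℕ,
      ∀ (V : Type) [Fintype V] [DecidableEq V], ∀ (H : Finset (Finset V)) (n : ℕ),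
      Fintype.card V = n → n₀ < n →
      (∀ e ∈ H, e.card = 3) →
      (∀ v : V, (5 / 8 + γ) ^ 2 * (n.choose 2 : ℝ) ≤
        ((H.filter (fun e => v ∈ e)).card : ℝ)) →
      ∃ (k : ℕ) (f : ℕ → V), IsLoosePath H k f ∧
        ((2 * k + 1 : ℕ) : ℝ) ≤ γ ^ 7 * n ∧
        ∀ U : Finset V, Disjoint U (pathVerts k f) → (U.card : ℝ) ≤ β * n →
          Even U.card →
          ∃ (k' : ℕ) (f' : ℕ → V), IsLoosePath H k' f' ∧
            pathVerts k' f' = pathVerts k f ∪ U ∧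
            ({f' 0, f' (2 * k')} : Finset V) = {f 0, f (2 * k)} := by
  obtain ⟨β, hβ, hlength⟩ := exists_eventually_chain_length (c := (γ / 10 / 2) ^ 7) (by positivity)
    (show 0 < min (γ / 10 / 2) (γ ^ 7) by positivity)
  have hdense : ∀ᶠ n : ℕ in Filter.atTop, 4 * (5 / 8 + γ) ^ 2 / γ ≤ n :=
    tendsto_natCast_atTop_atTop.eventually_ge_atTop _
  obtain ⟨n₀, hn₀⟩ := Filter.eventually_atTop.1 (hlength.and hdense)
  refine ⟨β, hβ, n₀, ?_⟩
  rintro V _ _ H _ rfl hn hH hdeg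
  obtain ⟨⟨m, hm, hβm⟩, hcard⟩ := hn₀ _ hn.le
  have : Nonempty V := Fintype.card_pos_iff.1 (Nat.zero_lt_of_lt hn)
  have hmδ : 12 * m + 20 ≤ γ / 10 / 2 * (Fintype.card V : ℝ) :=
    hm.trans (by gcongr; exact min_le_left _ _)
  have hmγ : 12 * m + 20 ≤ γ ^ 7 * (Fintype.card V : ℝ) :=
    hm.trans (by gcongr; exact min_le_right _ _)
  obtain ⟨k, f, hf, hk, habsorb⟩ := exists_absorbing_isLoosePath (by positivity) hβ
    (denseLinks_of_le_degree hγ hH hcard hdeg) hmδ hβm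
  have hk' : ((2 * k : ℕ) : ℝ) ≤ 12 * m := mod_cast hk
  exact ⟨k, f, hf, by push_cast at hk' ⊢; linarith, habsorb⟩
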